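/- Let H be a finite-dimensional complex Hilbert space, Â and B̂ self-adjoint operators with nondegenerate spectra satisfying ⟨φ_a^Â, φ_b^B̂⟩ ≠ 0 for all (a,b), and let (S_{a,b}) be a Born-compatible frame for Â and B̂ forming a basis of 𝓛(H), with dual frame (T_{a,b}) and associated quasiprobability representation (Q, Q̃). Then the Q-conditional expectation satisfies the right pull-through property 𝔼^Q_ρ̂(X̂ f(B̂)|B̂) = f(B̂) 𝔼^Q_ρ̂(X̂|B̂) for all density matrices ρ̂ with ⟨φ_b^B̂, ρ̂ φ_b^B̂⟩ ≠ 0 (∀b), all X̂ ∈ 𝓛(H), and all f : σ(B̂) → ℂ, if and only if S_{a,b} = Π_b^B̂ Π_a^Â for all (a,b), i.e., (Q, Q̃) is the right Kirkwood-Dirac representation. -/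

import Mathlib

open scoped ComplexOrder
noncomputable section

variable {H : Type*} [NormedAddCommGroup H] [InnerProductSpace ℂ H] [FiniteDimensional ℂ H]

/-- The rank-one orthogonal projector onto the line spanned by a unit vector `v`. -/
def proj (v : H) : H →ₗ[ℂ] H where
  toFun w := (inner ℂ v w : ℂ) • v
  map_add' x y := by simp [inner_add_right, add_smul]
  map_smul' c x := by simp [inner_smul_right, smul_smul]

/-- The operator `f(Ŷ) = Σ_y f(y) Π_y` associated to a function `f` on the spectrum,
for an operator with orthonormal eigenbasis `φ`. -/
def opF {ι : Type*} [Fintype ι] (φ : ι → H) (f : ι → ℂ) : H →ₗ[ℂ] H :=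
  ∑ i, f i • proj (φ i)


/-- The `Q`-conditional expectation
`𝔼^Q_ρ̂(X̂|B̂) = Σ_{(a,b)} conj(Q̃_{a,b}(X̂†)) (Q_{a,b}(ρ̂)/⟨φ_b^B̂, ρ̂ φ_b^B̂⟩) Π_b^B̂`,
where `Q_{a,b}(ρ̂) = Tr(ρ̂ S†_{a,b})` and `Q̃_{a,b}(X̂) = Tr(X̂ T†_{a,b})`. -/
def QcondExp {ιA ιB : Type*} [Fintype ιA] [Fintype ιB] (φB : ιB → H)
    (S T : ιA × ιB → (H →ₗ[ℂ] H)) (ρ X : H →ₗ[ℂ] H) : H →ₗ[ℂ] H :=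
  ∑ p : ιA × ιB,
    ((starRingEnd ℂ)
        (LinearMap.trace ℂ H (LinearMap.adjoint X ∘ₗ LinearMap.adjoint (T p))) *
      (LinearMap.trace ℂ H (ρ ∘ₗ LinearMap.adjoint (S p)) /
        (inner ℂ (φB p.2) (ρ (φB p.2)) : ℂ))) • proj (φB p.2)

/-!
Pairing with the dual frame splits `𝓛(H)` into the fibres `span {S†_{a,b} : a}`, one for each `b`,
and the value of `𝔼^Q_ρ̂(X̂|B̂)` at `b` is, up to the factor `⟨φ_b^B̂, ρ̂ φ_b^B̂⟩⁻¹`, the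
expectation in the state `ρ̂` of the component of `X̂` in the fibre over `b`. Faithful states
separate operators, so right pull-through says that right multiplication by `f(B̂)` preserves each
fibre and acts on the fibre over `b` as the scalar `f(b)`. On the frame this reads
`S_{a,b} = Π_b^B̂ S_{a,b}`. Then `Π_b^B̂` kills every term of `Σ_c S_{a,c}` but the one with
`c = b`, whence `S_{a,b} = Π_b^B̂ Σ_c S_{a,c}`, and the sum is `Π_a^Â` by Born compatibility.
-/

theorem comp_finset_sum {R M M₁ M₂ ι : Type*} [Semiring R] [AddCommMonoid M] [AddCommMonoid M₁]
    [AddCommMonoid M₂] [Module R M] [Module R M₁] [Module R M₂] (s : Finset ι)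
    (f : M₁ →ₗ[R] M₂) (g : ι → M →ₗ[R] M₁) : f ∘ₗ ∑ i ∈ s, g i = ∑ i ∈ s, f ∘ₗ g i :=
  map_sum (LinearMap.compRight ℕ f) g s

section Adjoint

variable {𝕜 E F : Type*} [RCLike 𝕜] [NormedAddCommGroup E] [InnerProductSpace 𝕜 E]
  [FiniteDimensional 𝕜 E] [NormedAddCommGroup F] [InnerProductSpace 𝕜 F] [FiniteDimensional 𝕜 F]

theorem trace_adjoint (X : E →ₗ[𝕜] E) :
    LinearMap.trace 𝕜 E (LinearMap.adjoint X) = starRingEnd 𝕜 (LinearMap.trace 𝕜 E X) := by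
  simp [LinearMap.trace_eq_sum_inner _ (stdOrthonormalBasis 𝕜 E), LinearMap.adjoint_inner_right]

theorem span_range_adjoint_eq_top {ι : Type*} {S : ι → (E →ₗ[𝕜] F)}
    (hspan : Submodule.span 𝕜 (Set.range S) = ⊤) :
    Submodule.span 𝕜 (Set.range fun i ↦ LinearMap.adjoint (S i)) = ⊤ := by
  rw [← LinearEquiv.range (LinearMap.adjoint (𝕜 := 𝕜) (E := E) (F := F)), ← Submodule.map_top,
    ← hspan, Submodule.map_span, ← Set.range_comp]
  rfl

end Adjoint

section Projectors

omit [FiniteDimensional ℂ H]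

@[simp]
theorem proj_apply (v w : H) : proj v w = (inner ℂ v w : ℂ) • v := rfl

theorem inner_proj_apply_self_nonneg (v w : H) : 0 ≤ (inner ℂ w (proj v w) : ℂ) := by
  rw [proj_apply, inner_smul_right, ← inner_conj_symm w v]
  exact mul_star_self_nonneg _

variable {ι : Type*} {φ : ι → H}

theorem proj_comp_proj [DecidableEq ι] (hφ : Orthonormal ℂ φ) (i j : ι) :
    proj (φ i) ∘ₗ proj (φ j) = if i = j then proj (φ i) else 0 := by
  ext w
  split_ifs with hij
  · simp [hij, hφ.1 j]
  · simp [hij, orthonormal_iff_ite.mp hφ]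

variable [Fintype ι]

theorem opF_single [DecidableEq ι] (i : ι) : opF φ (Pi.single i 1) = proj (φ i) := by
  simp [opF, Pi.single_apply, ite_smul]

theorem proj_comp_opF (hφ : Orthonormal ℂ φ) (f : ι → ℂ) (i : ι) :
    proj (φ i) ∘ₗ opF φ f = f i • proj (φ i) := by
  classical
  simp [opF, comp_finset_sum, LinearMap.comp_smul, proj_comp_proj hφ]

theorem opF_apply_basis (hφ : Orthonormal ℂ φ) (f : ι → ℂ) (i : ι) :
    opF φ f (φ i) = f i • φ i := by
  classical
  simp [opF, LinearMap.sum_apply, orthonormal_iff_ite.mp hφ]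

theorem opF_injective (hφ : Orthonormal ℂ φ) : Function.Injective (opF φ) := fun f g hfg ↦
  funext fun i ↦ smul_left_injective ℂ (hφ.ne_zero i) <| by
    simpa only [opF_apply_basis hφ] using LinearMap.congr_fun hfg (φ i)

theorem opF_comp_opF (hφ : Orthonormal ℂ φ) (f g : ι → ℂ) :
    opF φ f ∘ₗ opF φ g = opF φ fun i ↦ f i * g i := by
  calc opF φ f ∘ₗ opF φ g = ∑ i, (f i • proj (φ i)) ∘ₗ opF φ g :=
        Finset.sum_mul (R := Module.End ℂ H) _ _ _
    _ = opF φ fun i ↦ f i * g i := by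
        simp only [LinearMap.smul_comp, proj_comp_opF hφ, smul_smul]
        rfl

theorem comp_opF_eq_smul_iff (hφ : Orthonormal ℂ φ) (R : H →ₗ[ℂ] H) (i : ι) :
    (∀ f, R ∘ₗ opF φ f = f i • R) ↔ R ∘ₗ proj (φ i) = R := by
  classical
  refine ⟨fun h ↦ by simpa [opF_single] using h (Pi.single i 1), fun h f ↦ ?_⟩
  calc R ∘ₗ opF φ f = R ∘ₗ proj (φ i) ∘ₗ opF φ f := by rw [← LinearMap.comp_assoc, h]
    _ = f i • R := by rw [proj_comp_opF hφ, LinearMap.comp_smul, h]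

theorem forall_proj_comp_eq_self_iff {κ : Type*} (hφ : Orthonormal ℂ φ)
    (S : κ × ι → (H →ₗ[ℂ] H)) :
    (∀ p, proj (φ p.2) ∘ₗ S p = S p) ↔ ∀ p, S p = proj (φ p.2) ∘ₗ ∑ j, S (p.1, j) := by
  classical
  constructor
  · rintro h ⟨k, i⟩
    have hterm (j : ι) :
        (proj (φ i) ∘ₗ proj (φ j)) ∘ₗ S (k, j) = if i = j then S (k, j) else 0 := by
      rw [proj_comp_proj hφ]
      split_ifs with hij
      · exact hij ▸ h (k, i)
      · exact LinearMap.zero_comp _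
    calc S (k, i) = ∑ j, (proj (φ i) ∘ₗ proj (φ j)) ∘ₗ S (k, j) := by
          simp only [hterm, Finset.sum_ite_eq, Finset.mem_univ, if_true]
      _ = proj (φ i) ∘ₗ ∑ j, S (k, j) := by
          simp only [LinearMap.comp_assoc, h (k, _), comp_finset_sum]
  · intro h p
    rw [h p, ← LinearMap.comp_assoc, proj_comp_proj hφ, if_pos rfl]

end Projectors

theorem adjoint_proj (v : H) : LinearMap.adjoint (proj v) = proj v := by
  refine ((LinearMap.eq_adjoint_iff _ _).mpr fun x y ↦ ?_).symm
  simp [inner_smul_left, inner_smul_right, mul_comm]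

theorem adjoint_comp_proj_eq_self_iff (S : H →ₗ[ℂ] H) (v : H) :
    LinearMap.adjoint S ∘ₗ proj v = LinearMap.adjoint S ↔ proj v ∘ₗ S = S := by
  rw [← LinearMap.adjoint.injective.eq_iff (a := proj v ∘ₗ S), LinearMap.adjoint_comp, adjoint_proj]

theorem trace_proj_comp (v : H) (Y : H →ₗ[ℂ] H) :
    LinearMap.trace ℂ H (proj v ∘ₗ Y) = inner ℂ v (Y v) := by
  rw [LinearMap.trace_comp_comm', ← InnerProductSpace.trace_rankOne (𝕜 := ℂ) (Y v) v]
  congr 1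
  ext w
  simp

theorem trace_pos_of_posDef [Nontrivial H] {P : H →ₗ[ℂ] H}
    (hP : ∀ v ≠ 0, 0 < (inner ℂ v (P v) : ℂ)) : 0 < LinearMap.trace ℂ H P := by
  let e := stdOrthonormalBasis ℂ H
  have : NeZero (Module.finrank ℂ H) := ⟨Module.finrank_pos.ne'⟩
  rw [LinearMap.trace_eq_sum_inner P e]
  exact Finset.sum_pos (fun i _ ↦ hP _ (e.orthonormal.ne_zero i)) Finset.univ_nonempty

theorem eq_zero_of_forall_posDef_trace_comp_eq_zero {Y : H →ₗ[ℂ] H}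
    (h : ∀ P : H →ₗ[ℂ] H, (∀ v ≠ 0, 0 < (inner ℂ v (P v) : ℂ)) →
      LinearMap.trace ℂ H (P ∘ₗ Y) = 0) : Y = 0 := by
  have inner_self_pos (w : H) (hw : w ≠ 0) : 0 < (inner ℂ w w : ℂ) := by
    rw [inner_self_eq_norm_sq_to_K]
    exact pow_pos (Complex.zero_lt_real.mpr (norm_pos_iff.mpr hw)) 2
  have htrace : LinearMap.trace ℂ H Y = 0 := h LinearMap.id inner_self_pos
  refine (inner_map_self_eq_zero Y).mp fun v ↦ ?_
  have hadd := h (LinearMap.id + proj v) fun w hw ↦ by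
    rw [LinearMap.add_apply, inner_add_right]
    exact add_pos_of_pos_of_nonneg (inner_self_pos w hw) (inner_proj_apply_self_nonneg v w)
  have hv : (inner ℂ v (Y v) : ℂ) = 0 := by
    simpa only [LinearMap.add_comp, LinearMap.id_comp, map_add, htrace, trace_proj_comp, zero_add]
      using hadd
  exact inner_eq_zero_symm.mp hv

theorem eq_of_forall_faithful_state_trace_comp_eq {X Y : H →ₗ[ℂ] H}
    (h : ∀ ρ : H →ₗ[ℂ] H, (∀ v ≠ 0, 0 < (inner ℂ v (ρ v) : ℂ)) → LinearMap.trace ℂ H ρ = 1 →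
      LinearMap.trace ℂ H (ρ ∘ₗ X) = LinearMap.trace ℂ H (ρ ∘ₗ Y)) : X = Y := by
  nontriviality H
  refine sub_eq_zero.mp (eq_zero_of_forall_posDef_trace_comp_eq_zero fun P hP ↦ ?_)
  have htr : 0 < LinearMap.trace ℂ H P := trace_pos_of_posDef hP
  have hstate := h ((LinearMap.trace ℂ H P)⁻¹ • P)
    (fun v hv ↦ by
      rw [LinearMap.smul_apply, inner_smul_right]
      exact mul_pos (inv_pos.mpr htr) (hP v hv))
    (by rw [map_smul, smul_eq_mul, inv_mul_cancel₀ htr.ne'])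
  simp only [LinearMap.smul_comp, map_smul] at hstate
  rw [LinearMap.comp_sub, map_sub, sub_eq_zero]
  exact smul_right_injective ℂ (inv_ne_zero htr.ne') hstate

section FiberComponent

variable {ιA ιB : Type*} [Fintype ιA]

/-- The component `Σ_a Tr(T_{a,b} X̂) S†_{a,b}` of an operator `X̂` in the fibre over `b`; for a
frame `S` with dual frame `T` it is the projection onto `span {S†_{a,b} : a}` along the other
fibres. -/
def fiberComponent (S T : ιA × ιB → (H →ₗ[ℂ] H)) (b : ιB) : (H →ₗ[ℂ] H) →ₗ[ℂ] (H →ₗ[ℂ] H) :=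
  ∑ a, (LinearMap.trace ℂ H ∘ₗ LinearMap.compRight ℂ (T (a, b))).smulRight
    (LinearMap.adjoint (S (a, b)))

variable {S T : ιA × ιB → (H →ₗ[ℂ] H)}

theorem fiberComponent_apply (b : ιB) (X : H →ₗ[ℂ] H) :
    fiberComponent S T b X =
      ∑ a, LinearMap.trace ℂ H (T (a, b) ∘ₗ X) • LinearMap.adjoint (S (a, b)) := by
  simp [fiberComponent, LinearMap.sum_apply]

theorem trace_comp_fiberComponent (ρ : H →ₗ[ℂ] H) (b : ιB) (X : H →ₗ[ℂ] H) :
    LinearMap.trace ℂ H (ρ ∘ₗ fiberComponent S T b X) =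
      ∑ a, LinearMap.trace ℂ H (T (a, b) ∘ₗ X) *
        LinearMap.trace ℂ H (ρ ∘ₗ LinearMap.adjoint (S (a, b))) := by
  simp only [fiberComponent_apply, comp_finset_sum, LinearMap.comp_smul, map_sum, map_smul,
    smul_eq_mul]

theorem fiberComponent_adjoint [DecidableEq ιA] [DecidableEq ιB]
    (hdual : ∀ p q, LinearMap.trace ℂ H (T p ∘ₗ LinearMap.adjoint (S q)) = if p = q then 1 else 0)
    (b : ιB) (q : ιA × ιB) :
    fiberComponent S T b (LinearMap.adjoint (S q)) =
      if b = q.2 then LinearMap.adjoint (S q) else 0 := by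
  obtain ⟨a, c⟩ := q
  rcases eq_or_ne b c with rfl | hbc
  · simp [fiberComponent_apply, hdual]
  · simp [fiberComponent_apply, hdual, hbc]

variable [DecidableEq ιA] [DecidableEq ιB]

theorem sum_fiberComponent [Fintype ιB] (hspan : Submodule.span ℂ (Set.range S) = ⊤)
    (hdual : ∀ p q, LinearMap.trace ℂ H (T p ∘ₗ LinearMap.adjoint (S q)) = if p = q then 1 else 0) :
    ∑ b, fiberComponent S T b = LinearMap.id := by
  refine LinearMap.ext_on_range (span_range_adjoint_eq_top hspan) fun q ↦ ?_
  simp [LinearMap.sum_apply, fiberComponent_adjoint hdual]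

theorem forall_fiberComponent_comp_iff [Finite ιB]
    (hspan : Submodule.span ℂ (Set.range S) = ⊤)
    (hdual : ∀ p q, LinearMap.trace ℂ H (T p ∘ₗ LinearMap.adjoint (S q)) = if p = q then 1 else 0)
    (F : H →ₗ[ℂ] H) (f : ιB → ℂ) :
    (∀ b X, fiberComponent S T b (X ∘ₗ F) = f b • fiberComponent S T b X) ↔
      ∀ q, LinearMap.adjoint (S q) ∘ₗ F = f q.2 • LinearMap.adjoint (S q) := by
  have := Fintype.ofFinite ιB
  constructor
  · intro h q
    calc LinearMap.adjoint (S q) ∘ₗ F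
        = ∑ b, fiberComponent S T b (LinearMap.adjoint (S q) ∘ₗ F) := by
          rw [← LinearMap.sum_apply, sum_fiberComponent hspan hdual, LinearMap.id_apply]
      _ = f q.2 • LinearMap.adjoint (S q) := by
          simp [h, fiberComponent_adjoint hdual]
  · intro h b
    refine LinearMap.congr_fun (f := fiberComponent S T b ∘ₗ LinearMap.lcomp ℂ H F)
      (g := f b • fiberComponent S T b) ?_
    refine LinearMap.ext_on_range (span_range_adjoint_eq_top hspan) fun q ↦ ?_
    rcases eq_or_ne b q.2 with rfl | hb
    · simp [LinearMap.lcomp_apply', h]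
    · simp [LinearMap.lcomp_apply', h, fiberComponent_adjoint hdual, hb]

end FiberComponent

section RightPullThrough

variable {ιA ιB : Type*} [Fintype ιA] [Fintype ιB]

theorem qcondExp_eq_opF (φ : ιB → H) (S T : ιA × ιB → (H →ₗ[ℂ] H)) (ρ X : H →ₗ[ℂ] H) :
    QcondExp φ S T ρ X = opF φ fun b ↦
      LinearMap.trace ℂ H (ρ ∘ₗ fiberComponent S T b X) / (inner ℂ (φ b) (ρ (φ b)) : ℂ) := by
  have hconj (p : ιA × ιB) :
      starRingEnd ℂ (LinearMap.trace ℂ H (LinearMap.adjoint X ∘ₗ LinearMap.adjoint (T p))) =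
        LinearMap.trace ℂ H (T p ∘ₗ X) := by
    rw [← LinearMap.adjoint_comp, trace_adjoint, Complex.conj_conj]
  simp only [QcondExp, opF, hconj, Fintype.sum_prod_type_right, trace_comp_fiberComponent,
    Finset.sum_div, Finset.sum_smul, mul_div_assoc]

/-- The right pull-through property `𝔼^Q_ρ̂(X̂ f(B̂)|B̂) = f(B̂) 𝔼^Q_ρ̂(X̂|B̂)` of the
`Q`-conditional expectation of the frame `S` with dual frame `T`, where `B̂` enters through its
eigenbasis `φB` only: `ρ̂` ranges over the density matrices whose diagonal in `φB` has no zero, and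
`f` over the functions of the index of the eigenvalue. -/
def HasRightPullThrough (φB : OrthonormalBasis ιB ℂ H) (S T : ιA × ιB → (H →ₗ[ℂ] H)) : Prop :=
  ∀ ρ : H →ₗ[ℂ] H, (∀ v : H, 0 ≤ (inner ℂ v (ρ v) : ℂ)) →
    LinearMap.trace ℂ H ρ = 1 →
    (∀ b : ιB, (inner ℂ (φB b) (ρ (φB b)) : ℂ) ≠ 0) →
    ∀ (X : H →ₗ[ℂ] H) (f : ιB → ℂ),
      QcondExp φB S T ρ (X ∘ₗ opF φB f) = opF φB f ∘ₗ QcondExp φB S T ρ X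

theorem qcondExp_comp_opF_eq_iff {φ : ιB → H} (hφ : Orthonormal ℂ φ)
    (S T : ιA × ιB → (H →ₗ[ℂ] H)) {ρ : H →ₗ[ℂ] H} (hρ : ∀ b, (inner ℂ (φ b) (ρ (φ b)) : ℂ) ≠ 0)
    (X : H →ₗ[ℂ] H) (f : ιB → ℂ) :
    QcondExp φ S T ρ (X ∘ₗ opF φ f) = opF φ f ∘ₗ QcondExp φ S T ρ X ↔
      ∀ b, LinearMap.trace ℂ H (ρ ∘ₗ fiberComponent S T b (X ∘ₗ opF φ f)) =
        LinearMap.trace ℂ H (ρ ∘ₗ (f b • fiberComponent S T b X)) := by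
  rw [qcondExp_eq_opF, qcondExp_eq_opF, opF_comp_opF hφ, (opF_injective hφ).eq_iff, funext_iff]
  refine forall_congr' fun b ↦ ?_
  rw [← mul_div_assoc, div_left_inj' (hρ b), LinearMap.comp_smul, map_smul, smul_eq_mul]

theorem hasRightPullThrough_iff_fiberComponent (φB : OrthonormalBasis ιB ℂ H)
    (S T : ιA × ιB → (H →ₗ[ℂ] H)) :
    HasRightPullThrough φB S T ↔
      ∀ f b X, fiberComponent S T b (X ∘ₗ opF φB f) = f b • fiberComponent S T b X := by
  constructor
  · intro h f b X
    refine eq_of_forall_faithful_state_trace_comp_eq fun ρ hpos htr ↦ ?_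
    have hnonneg (v : H) : 0 ≤ (inner ℂ v (ρ v) : ℂ) := by
      rcases eq_or_ne v 0 with rfl | hv
      · simp
      · exact (hpos v hv).le
    have hdiag (c : ιB) : (inner ℂ (φB c) (ρ (φB c)) : ℂ) ≠ 0 :=
      (hpos _ (φB.orthonormal.ne_zero c)).ne'
    exact (qcondExp_comp_opF_eq_iff φB.orthonormal S T hdiag X f).mp (h ρ hnonneg htr hdiag X f) b
  · intro h ρ _ _ hdiag X f
    exact (qcondExp_comp_opF_eq_iff φB.orthonormal S T hdiag X f).mpr fun b ↦ by rw [h f b X]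

variable [DecidableEq ιA] [DecidableEq ιB]

theorem stmt18_general (φB : OrthonormalBasis ιB ℂ H) (S T : ιA × ιB → (H →ₗ[ℂ] H))
    (hspan : Submodule.span ℂ (Set.range S) = ⊤)
    (hdual : ∀ p q : ιA × ιB,
      LinearMap.trace ℂ H (T p ∘ₗ LinearMap.adjoint (S q)) = if p = q then 1 else 0) :
    HasRightPullThrough φB S T ↔ ∀ p, S p = proj (φB p.2) ∘ₗ ∑ b, S (p.1, b) := by
  calc HasRightPullThrough φB S T
      ↔ ∀ f p, LinearMap.adjoint (S p) ∘ₗ opF φB f = f p.2 • LinearMap.adjoint (S p) := by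
        rw [hasRightPullThrough_iff_fiberComponent]
        exact forall_congr' fun f ↦ forall_fiberComponent_comp_iff hspan hdual (opF φB f) f
    _ ↔ ∀ p, proj (φB p.2) ∘ₗ S p = S p := by
        rw [forall_comm]
        simp only [comp_opF_eq_smul_iff φB.orthonormal, adjoint_comp_proj_eq_self_iff]
    _ ↔ ∀ p, S p = proj (φB p.2) ∘ₗ ∑ b, S (p.1, b) :=
        forall_proj_comp_eq_self_iff φB.orthonormal S

end RightPullThrough

/-- for a Born-compatible frame `(S_{a,b})` (a basis of `𝓛(H)`, with dual frame
`(T_{a,b})`), the associated `Q`-conditional expectation satisfies the right pull-through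
property `𝔼^Q_ρ̂(X̂f(B̂)|B̂) = f(B̂)𝔼^Q_ρ̂(X̂|B̂)` for all admissible states `ρ̂`, operators `X̂`
and functions `f`, if and only if `S_{a,b} = Π_b^B̂ Π_a^Â` for all `(a,b)`, i.e. `(Q,Q̃)` is
the right Kirkwood-Dirac representation. -/
theorem stmt18 {ιA ιB : Type*} [Fintype ιA] [Fintype ιB] [DecidableEq ιA] [DecidableEq ιB]
    (φA : OrthonormalBasis ιA ℂ H) (φB : OrthonormalBasis ιB ℂ H)
    (A B : H →ₗ[ℂ] H) (α : ιA → ℝ) (β : ιB → ℝ)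
    (hα : Function.Injective α) (hβ : Function.Injective β)
    (hA : ∀ a, A (φA a) = (α a : ℂ) • φA a) (hB : ∀ b, B (φB b) = (β b : ℂ) • φB b)
    (hAB : ∀ (a : ιA) (b : ιB), (inner ℂ (φA a) (φB b) : ℂ) ≠ 0)
    (S T : ιA × ιB → (H →ₗ[ℂ] H))
    (hBornB : ∀ b₀ : ιB, ∑ a : ιA, LinearMap.adjoint (S (a, b₀)) = proj (φB b₀))
    (hBornA : ∀ a₀ : ιA, ∑ b : ιB, LinearMap.adjoint (S (a₀, b)) = proj (φA a₀))
    (hindep : LinearIndependent ℂ S)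
    (hspan : Submodule.span ℂ (Set.range S) = ⊤)
    (hdual : ∀ p q : ιA × ιB,
      LinearMap.trace ℂ H (T p ∘ₗ LinearMap.adjoint (S q)) = if p = q then 1 else 0) :
    (∀ ρ : H →ₗ[ℂ] H, (∀ v : H, 0 ≤ (inner ℂ v (ρ v) : ℂ)) →
      LinearMap.trace ℂ H ρ = 1 →
      (∀ b : ιB, (inner ℂ (φB b) (ρ (φB b)) : ℂ) ≠ 0) →
      ∀ (X : H →ₗ[ℂ] H) (f : ιB → ℂ),
        QcondExp (fun b => φB b) S T ρ (X ∘ₗ opF (fun b => φB b) f) =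
          opF (fun b => φB b) f ∘ₗ QcondExp (fun b => φB b) S T ρ X) ↔
    (∀ p : ιA × ιB, S p = proj (φB p.2) ∘ₗ proj (φA p.1)) := by
  have hsum (a : ιA) : ∑ b, S (a, b) = proj (φA a) :=
    LinearMap.adjoint.injective (by rw [map_sum, hBornA, adjoint_proj])
  exact (stmt18_general φB S T hspan hdual).trans (by simp only [hsum])
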